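/- Let X be a real normed vector space. The midpoint map sending {a, b} to {(a+b)/2} is a 1-Lipschitz retraction of X(2) onto X(1): for all a, b, c, d ∈ X, ‖(a+b)/2 − (c+d)/2‖ ≤ d_H({a, b}, {c, d}), and the map sends each singleton {a} to itself. -/

import Mathlib

/-!
Each point of `{a, b}` lies within the Hausdorff distance of some point of `{c, d}`, and vice versa.
If `a` and `b` are both close to `c`, then `d` is still close to one of them, so the points can
always be matched in pairs. The distance between the midpoints is at most the average distance of
the matched points.
-/

open Metric

section HausdorffDist

variable {α : Type*} [PseudoMetricSpace α]

theorem exists_dist_le_hausdorffDist_of_isCompact {s t : Set α} {x : α} (ht : IsCompact t)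
    (ht_nonempty : t.Nonempty) (hx : x ∈ s) (hst : hausdorffEDist s t ≠ ⊤) :
    ∃ y ∈ t, dist x y ≤ hausdorffDist s t := by
  obtain ⟨y, hy, hxy⟩ := ht.exists_infDist_eq_dist ht_nonempty x
  exact ⟨y, hy, hxy ▸ infDist_le_hausdorffDist_of_mem hx hst⟩

theorem dist_le_hausdorffDist_pair_or {s : Set α} {x : α} (hx : x ∈ s)
    (hs : Bornology.IsBounded s) (y z : α) :
    dist x y ≤ hausdorffDist s {y, z} ∨ dist x z ≤ hausdorffDist s {y, z} := by
  have hfin : hausdorffEDist s {y, z} ≠ ⊤ :=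
    hausdorffEDist_ne_top_of_nonempty_of_bounded ⟨x, hx⟩ (Set.insert_nonempty y {z}) hs
      (Set.toFinite {y, z}).isBounded
  simpa only [Set.mem_insert_iff, Set.mem_singleton_iff, exists_eq_or_imp, exists_eq_left] using
    exists_dist_le_hausdorffDist_of_isCompact (Set.toFinite {y, z}).isCompact
      (Set.insert_nonempty y {z}) hx hfin

theorem max_dist_le_hausdorffDist_pair_or (a b c d : α) :
    max (dist a c) (dist b d) ≤ hausdorffDist {a, b} {c, d} ∨
      max (dist a d) (dist b c) ≤ hausdorffDist {a, b} {c, d} := by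
  have bounded_pair (x y : α) : Bornology.IsBounded {x, y} := (Set.toFinite {x, y}).isBounded
  have ha := dist_le_hausdorffDist_pair_or (Set.mem_insert a {b}) (bounded_pair a b) c d
  have hb := dist_le_hausdorffDist_pair_or (Set.mem_insert_of_mem a (Set.mem_singleton b))
    (bounded_pair a b) c d
  have hc := dist_le_hausdorffDist_pair_or (Set.mem_insert c {d}) (bounded_pair c d) a b
  have hd := dist_le_hausdorffDist_pair_or (Set.mem_insert_of_mem c (Set.mem_singleton d))
    (bounded_pair c d) a b
  rw [hausdorffDist_comm, dist_comm _ a, dist_comm _ b] at hc hd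
  simp only [max_le_iff]
  tauto

end HausdorffDist

section Midpoint

variable {V P : Type*} [SeminormedAddCommGroup V] [NormedSpace ℝ V] [PseudoMetricSpace P]
  [NormedAddTorsor V P]

theorem dist_midpoint_midpoint_le_max (a b c d : P) :
    dist (midpoint ℝ a b) (midpoint ℝ c d) ≤ max (dist a c) (dist b d) :=
  calc
    dist (midpoint ℝ a b) (midpoint ℝ c d) ≤ (dist a c + dist b d) / 2 := by
      simpa only [Real.norm_ofNat] using dist_midpoint_midpoint_le' (𝕜 := ℝ) a b c d
    _ ≤ max (dist a c) (dist b d) := by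
      linarith [le_max_left (dist a c) (dist b d), le_max_right (dist a c) (dist b d)]

theorem dist_midpoint_midpoint_le_hausdorffDist (a b c d : P) :
    dist (midpoint ℝ a b) (midpoint ℝ c d) ≤ hausdorffDist {a, b} {c, d} := by
  rcases max_dist_le_hausdorffDist_pair_or a b c d with h | h
  · exact (dist_midpoint_midpoint_le_max a b c d).trans h
  · rw [midpoint_comm c d]
    exact (dist_midpoint_midpoint_le_max a b d c).trans h

theorem midpoint_map_one_lipschitz_retraction_general :
    (∀ a b c d : P,
      dist (midpoint ℝ a b) (midpoint ℝ c d) ≤ hausdorffDist ({a, b} : Set P) ({c, d} : Set P)) ∧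
    (∀ a : P, ({midpoint ℝ a a} : Set P) = {a}) :=
  ⟨dist_midpoint_midpoint_le_hausdorffDist, fun a ↦ by rw [midpoint_self]⟩

end Midpoint

/-- In a real normed vector space `X`, the midpoint map `{a, b} ↦ {(a+b)/2}` is a
`1`-Lipschitz retraction of `X(2)` onto `X(1)`: for all `a, b, c, d`,
`‖(a+b)/2 − (c+d)/2‖ ≤ d_H({a, b}, {c, d})`, and each singleton `{a}` is sent to itself. -/
theorem midpoint_map_one_lipschitz_retraction
    {X : Type*} [NormedAddCommGroup X] [NormedSpace ℝ X] :
    (∀ a b c d : X,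
      ‖(2 : ℝ)⁻¹ • (a + b) - (2 : ℝ)⁻¹ • (c + d)‖ ≤
        Metric.hausdorffDist ({a, b} : Set X) ({c, d} : Set X)) ∧
    (∀ a : X, ({(2 : ℝ)⁻¹ • (a + a)} : Set X) = ({a} : Set X)) := by
  simpa only [midpoint_eq_smul_add, invOf_eq_inv, dist_eq_norm] using
    midpoint_map_one_lipschitz_retraction_general (V := X) (P := X)
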